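/- Let r ≥ 3 and let ℓ ≥ 2r + 11 be an odd integer. For sufficiently large n, ex_r(n, Berge-(P_ℓ ∪ P_1)) = max{ ex_r(n, Berge-P_ℓ), C((ℓ+1)/2, r-1)·(n - (ℓ+1)/2) + C((ℓ+1)/2, r) }. -/

import Mathlib

/-!
Write `ℓ = 2k - 1` and let `coreFamily K r` consist of all `r`-sets with at most one vertex
outside a fixed `k`-set `K`. It has `C(k, r - 1) (n - k) + C(k, r)` members and contains no
Berge-(`P_ℓ ∪ P_1`), since `K` would induce a vertex cover of a graph having a matching of size
`k + 1`. Together with the fact that `P_ℓ ∪ P_1` contains `P_ℓ`, this gives the lower bound.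

For the upper bound, let `H` be Berge-(`P_ℓ ∪ P_1`)-free. If it is also Berge-`P_ℓ`-free there is
nothing to prove. Otherwise fix a Berge-`P_ℓ` with core `C`, `|C| = 2k`. Every hyperedge other
than the `ℓ` hyperedges of this path has at most one vertex outside `C`. Apart from boundedly many
hyperedges, `H` is therefore described by the links in `C` of the vertices outside `C`, which are
`(r - 1)`-uniform. If `|H| > C(k, r - 1) (n - k) + C(k, r)` and `n` is large, many
vertices have a link of size at least `C(k, r - 1)`, and by pigeonhole many of them have the
same such link `L` (`exists_popular`).

Vertices `c ≠ c'` of `C` lying in distinct members of `L` can be joined by a Berge path of length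
two through any vertex with link `L`. As `|L| ≥ C(k, r - 1)`, there is a set `U` of `k` vertices
pairwise joinable in this way (`exists_linkGood`). Alternating between `U` and vertices with link
`L` gives Berge copies of `P_ℓ` with great freedom in the vertices outside `U`
(`exists_path_of_linkGood`). If some hyperedge had two vertices outside `U`, one of these copies
could be chosen to avoid it, giving a Berge-(`P_ℓ ∪ P_1`). Hence `H ⊆ coreFamily U r`
(`subset_coreFamily_of_popular`), contradicting the size of `H`.
-/

open Finset

/-- A Berge copy of the graph `F` in the hypergraph `H`: an injective embedding of the
vertices of `F` together with an injective assignment of distinct hyperedges to the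
edges of `F`, each hyperedge containing (the images of) both endpoints of its edge. -/
def IsBergeCopy {α V : Type*} (F : SimpleGraph α) (H : Finset (Finset V)) : Prop :=
  ∃ (f : α → V) (φ : Sym2 α → Finset V),
    Function.Injective f ∧ Set.InjOn φ F.edgeSet ∧
    ∀ e ∈ F.edgeSet, φ e ∈ H ∧ ∀ x ∈ e, f x ∈ φ e

/-- The Turán number `ex_r(n, Berge-F)`: the maximum number of hyperedges in an
`n`-vertex `r`-uniform hypergraph with no Berge copy of `F`. -/
noncomputable def exBerge {α : Type*} (r n : ℕ) (F : SimpleGraph α) : ℕ :=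
  sSup {m | ∃ H : Finset (Finset (Fin n)),
    (∀ e ∈ H, e.card = r) ∧ ¬ IsBergeCopy F H ∧ H.card = m}

/-- The path with `ℓ` edges, on `ℓ+1` vertices. -/
def pathG (ℓ : ℕ) : SimpleGraph (Fin (ℓ + 1)) :=
  SimpleGraph.fromRel (fun x y => (x : ℕ) + 1 = (y : ℕ))

/-- `c` vertex-disjoint stars, each with `ℓ` edges (centers are the vertices `(i, 0)`). -/
def starsG (c ℓ : ℕ) : SimpleGraph (Fin c × Fin (ℓ + 1)) :=
  SimpleGraph.fromRel (fun x y => x.1 = y.1 ∧ x.2 = 0)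

/-- A matching with `t` edges. -/
def matchingG (t : ℕ) : SimpleGraph (Fin t × Fin 2) :=
  SimpleGraph.fromRel (fun x y => x.1 = y.1)

/-- Vertex-disjoint union of `k` paths, the `i`-th having `ℓ i` edges. -/
def pathsG (k : ℕ) (ℓ : Fin k → ℕ) : SimpleGraph (Σ i : Fin k, Fin (ℓ i + 1)) :=
  SimpleGraph.fromRel (fun x y => x.1 = y.1 ∧ (x.2 : ℕ) + 1 = (y.2 : ℕ))

/-- A hypergraph is connected if every two vertices are joined by a walk of hyperedges
(equivalently, lie on a common Berge path). -/
def HyperConnected {V : Type*} (H : Finset (Finset V)) : Prop :=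
  ∀ u v : V, Relation.ReflTransGen (fun a b => ∃ e ∈ H, a ∈ e ∧ b ∈ e) u v

/-- The connected Turán number `ex^con_r(n, Berge-F)`. -/
noncomputable def exConBerge {α : Type*} (r n : ℕ) (F : SimpleGraph α) : ℕ :=
  sSup {m | ∃ H : Finset (Finset (Fin n)),
    (∀ e ∈ H, e.card = r) ∧ HyperConnected H ∧ ¬ IsBergeCopy F H ∧ H.card = m}


/-! ### Berge paths -/

/-- Edges of the path join consecutive indices, and are determined by the smaller endpoint. -/
lemma pathG_edge {ℓ : ℕ} {e : Sym2 (Fin (ℓ + 1))} (he : e ∈ (pathG ℓ).edgeSet) :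
    (e.inf : ℕ) < ℓ ∧
      ∀ x, x ∈ e ↔ ((x : ℕ) = (e.inf : ℕ) ∨ (x : ℕ) = (e.inf : ℕ) + 1) := by
  induction e using Sym2.ind with
  | _ a b =>
    rw [SimpleGraph.mem_edgeSet, pathG, SimpleGraph.fromRel_adj] at he
    obtain ⟨-, h⟩ := he
    have ha := a.isLt
    have hb := b.isLt
    have hinf : ((s(a, b).inf : Fin (ℓ + 1)) : ℕ) = min (a : ℕ) (b : ℕ) := by
      rw [Sym2.inf_mk]
      exact Fin.coe_min a b
    rw [hinf]
    refine ⟨by omega, fun x => ?_⟩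
    rw [Sym2.mem_iff, Fin.ext_iff, Fin.ext_iff]
    omega

/-- A Berge path presented by its sequences of core vertices and of hyperedges. -/
lemma isBergeCopy_path_of_seq {V : Type*} {ℓ : ℕ} {H : Finset (Finset V)}
    (g : ℕ → V) (ψ : ℕ → Finset V)
    (hg : ∀ i ≤ ℓ, ∀ j ≤ ℓ, g i = g j → i = j)
    (hψ : ∀ i < ℓ, ∀ j < ℓ, ψ i = ψ j → i = j)
    (hH : ∀ i < ℓ, ψ i ∈ H ∧ g i ∈ ψ i ∧ g (i + 1) ∈ ψ i) :
    ∃ (f : Fin (ℓ + 1) → V) (φ : Sym2 (Fin (ℓ + 1)) → Finset V),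
      Function.Injective f ∧ Set.InjOn φ (pathG ℓ).edgeSet ∧
      (∀ e ∈ (pathG ℓ).edgeSet, φ e ∈ H ∧ ∀ x ∈ e, f x ∈ φ e) ∧
      (∀ x, ∃ i ≤ ℓ, f x = g i) ∧
      (∀ e ∈ (pathG ℓ).edgeSet, ∃ i < ℓ, φ e = ψ i) := by
  refine ⟨fun x => g x, fun e => ψ (e.inf : Fin (ℓ + 1)), ?_, ?_, ?_, ?_, ?_⟩
  · intro x y hxy
    exact Fin.ext (hg _ (by omega) _ (by omega) hxy)
  · intro e he e' he' h
    obtain ⟨h1, h2⟩ := pathG_edge he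
    obtain ⟨h1', h2'⟩ := pathG_edge he'
    have := hψ _ h1 _ h1' h
    ext x
    rw [h2, h2', this]
  · intro e he
    obtain ⟨h1, h2⟩ := pathG_edge he
    obtain ⟨h3, h4, h5⟩ := hH _ h1
    refine ⟨h3, fun x hx => ?_⟩
    rcases (h2 x).1 hx with h | h
    · simpa only [h] using h4
    · simpa only [h] using h5
  · intro x
    exact ⟨x, by omega, rfl⟩
  · intro e he
    exact ⟨_, (pathG_edge he).1, rfl⟩

/-- A Berge path extends to a Berge copy of its disjoint union with an edge as soon as some
hyperedge not used by the path has two vertices outside the core. -/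
lemma isBergeCopy_sum_of_path {V : Type*} {ℓ : ℕ} {H : Finset (Finset V)}
    {f : Fin (ℓ + 1) → V} {φ : Sym2 (Fin (ℓ + 1)) → Finset V}
    (hf : Function.Injective f) (hφ : Set.InjOn φ (pathG ℓ).edgeSet)
    (hH : ∀ e ∈ (pathG ℓ).edgeSet, φ e ∈ H ∧ ∀ x ∈ e, f x ∈ φ e)
    {h : Finset V} (hh : h ∈ H) (hne : ∀ e ∈ (pathG ℓ).edgeSet, φ e ≠ h)
    {a b : V} (hab : a ≠ b) (ha : a ∈ h) (hb : b ∈ h)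
    (haf : ∀ x, f x ≠ a) (hbf : ∀ x, f x ≠ b) :
    IsBergeCopy ((pathG ℓ).sum (pathG 1)) H := by
  classical
  have hinj : Function.Injective
      (Sym2.map (Sum.inl : Fin (ℓ + 1) → Fin (ℓ + 1) ⊕ Fin (1 + 1))) :=
    Sym2.map.injective Sum.inl_injective
  -- Edges of the path keep their hyperedge; every other pair is sent to `h`.
  let Φ : Sym2 (Fin (ℓ + 1) ⊕ Fin (1 + 1)) → Finset V := fun e =>
    if hx : ∃ e0, Sym2.map Sum.inl e0 = e then φ hx.choose else h
  have hΦl : ∀ e0, Φ (Sym2.map Sum.inl e0) = φ e0 := by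
    intro e0
    have hx : ∃ e1, Sym2.map (Sum.inl : Fin (ℓ + 1) → Fin (ℓ + 1) ⊕ Fin (1 + 1)) e1
        = Sym2.map Sum.inl e0 := ⟨e0, rfl⟩
    simp only [Φ, dif_pos hx]
    rw [hinj hx.choose_spec]
  have hΦr : ∀ x y, Φ s(Sum.inr x, y) = h := by
    intro x y
    have hx : ¬ ∃ e0, Sym2.map (Sum.inl : Fin (ℓ + 1) → Fin (ℓ + 1) ⊕ Fin (1 + 1)) e0
        = s(Sum.inr x, y) := by
      rintro ⟨e0, he0⟩
      have : (Sum.inr x : Fin (ℓ + 1) ⊕ Fin (1 + 1)) ∈ Sym2.map Sum.inl e0 := by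
        rw [he0]; exact Sym2.mem_mk_left _ _
      rw [Sym2.mem_map] at this
      obtain ⟨z, -, hz⟩ := this
      cases hz
    simp only [Φ, dif_neg hx]
  have hcases : ∀ e ∈ ((pathG ℓ).sum (pathG 1)).edgeSet,
      (∃ e0 ∈ (pathG ℓ).edgeSet, e = Sym2.map Sum.inl e0) ∨
      e = s(Sum.inr 0, Sum.inr 1) := by
    intro e he
    induction e using Sym2.ind with
    | _ x y =>
      rw [SimpleGraph.mem_edgeSet] at he
      rcases x with x | x <;> rcases y with y | y
      · exact Or.inl ⟨s(x, y), by simpa using he, rfl⟩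
      · simp at he
      · simp at he
      · right
        have hxy : x ≠ y := by
          rintro rfl
          exact he.ne rfl
        have : (x = 0 ∧ y = 1) ∨ (x = 1 ∧ y = 0) := by
          clear he; revert x y; decide
        rcases this with ⟨rfl, rfl⟩ | ⟨rfl, rfl⟩
        · rfl
        · exact Sym2.eq_swap
  refine ⟨Sum.elim f ![a, b], Φ, ?_, ?_, ?_⟩
  · apply Function.Injective.sumElim hf
    · intro x y hxy
      fin_cases x <;> fin_cases y <;> simp_all
    · intro x y
      fin_cases y
      · exact haf x
      · exact hbf x
  · intro e he e' he' hee
    rcases hcases e he with ⟨e0, h0, rfl⟩ | rfl <;>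
      rcases hcases e' he' with ⟨e1, h1, rfl⟩ | rfl
    · rw [hΦl, hΦl] at hee
      rw [hφ h0 h1 hee]
    · rw [hΦl, hΦr] at hee
      exact absurd hee (hne _ h0)
    · rw [hΦl, hΦr] at hee
      exact absurd hee.symm (hne _ h1)
    · rfl
  · intro e he
    rcases hcases e he with ⟨e0, h0, rfl⟩ | rfl
    · rw [hΦl]
      refine ⟨(hH e0 h0).1, fun x hx => ?_⟩
      rw [Sym2.mem_map] at hx
      obtain ⟨y, hy, rfl⟩ := hx
      exact (hH e0 h0).2 y hy
    · rw [hΦr]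
      refine ⟨hh, fun x hx => ?_⟩
      rw [Sym2.mem_iff] at hx
      rcases hx with rfl | rfl
      · exact ha
      · exact hb

/-! ### The extremal family -/

/-- The `r`-sets with at most one vertex outside `K`. -/
def coreFamily {V : Type*} [Fintype V] [DecidableEq V] (K : Finset V) (r : ℕ) :
    Finset (Finset V) :=
  univ.filter fun h => h.card = r ∧ (h \ K).card ≤ 1

lemma card_coreFamily {V : Type*} [Fintype V] [DecidableEq V] (K : Finset V) {r : ℕ}
    (hr : 1 ≤ r) :
    (coreFamily K r).card =
      K.card.choose (r - 1) * (Fintype.card V - K.card) + K.card.choose r := by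
  have hsplit : coreFamily K r =
      ((K.powersetCard (r - 1)) ×ˢ Kᶜ).image (fun p => insert p.2 p.1) ∪ K.powersetCard r := by
    ext h
    simp only [coreFamily, mem_filter, mem_univ, true_and, mem_union, mem_image, mem_product,
      mem_powersetCard, mem_compl, Prod.exists]
    constructor
    · rintro ⟨h1, h2⟩
      rcases Nat.lt_or_ge (h \ K).card 1 with h3 | h3
      · right
        exact ⟨sdiff_eq_empty_iff_subset.1 (card_eq_zero.1 (by omega)), h1⟩
      · left
        obtain ⟨v, hv⟩ := card_eq_one.1 (le_antisymm h2 h3)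
        have hvh : v ∈ h \ K := by rw [hv]; exact mem_singleton_self v
        rw [mem_sdiff] at hvh
        refine ⟨h.erase v, v, ⟨⟨fun x hx => ?_, ?_⟩, hvh.2⟩, insert_erase hvh.1⟩
        · rw [mem_erase] at hx
          by_contra hxK
          have : x ∈ h \ K := mem_sdiff.2 ⟨hx.2, hxK⟩
          rw [hv, mem_singleton] at this
          exact hx.1 this
        · rw [card_erase_of_mem hvh.1, h1]
    · rintro (⟨S, v, ⟨⟨h1, h2⟩, h3⟩, rfl⟩ | ⟨h1, h2⟩)
      · refine ⟨?_, ?_⟩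
        · rw [card_insert_of_notMem (fun h => h3 (h1 h)), h2]
          omega
        · rw [insert_sdiff_of_notMem _ h3, sdiff_eq_empty_iff_subset.2 h1]
          simp
      · refine ⟨h2, ?_⟩
        rw [sdiff_eq_empty_iff_subset.2 h1]
        simp
  rw [hsplit, card_union_of_disjoint, card_image_of_injOn, card_product, card_powersetCard,
    card_powersetCard, card_compl]
  · rintro ⟨S, v⟩ h1 ⟨T, w⟩ h2 h
    simp only [coe_product, Set.mem_prod, mem_coe, mem_powersetCard, mem_compl] at h1 h2 h
    obtain ⟨⟨hS, -⟩, hv⟩ := h1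
    obtain ⟨⟨hT, -⟩, hw⟩ := h2
    have hvw : v = w := by
      have : v ∈ insert w T := by rw [← h]; exact mem_insert_self _ _
      rcases mem_insert.1 this with h' | h'
      · exact h'
      · exact absurd (hT h') hv
    subst hvw
    have : S = T := by
      rw [← erase_insert (fun h => hv (hS h)), h, erase_insert (fun h => hv (hT h))]
    rw [this]
  · rw [disjoint_left]
    intro h h1 h2
    simp only [mem_image, mem_product, mem_powersetCard, mem_compl, Prod.exists] at h1 h2
    obtain ⟨S, v, ⟨-, hv⟩, rfl⟩ := h1
    exact hv (h2.1 (mem_insert_self _ _))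

/-- Every hyperedge contains at most one vertex outside `K`, so the core of a Berge copy of
`P_{2k-1} ∪ P_1` would have a vertex cover inside `K`; but this graph has a matching of size
`k + 1`. -/
lemma not_isBergeCopy_coreFamily {V : Type*} [Fintype V] [DecidableEq V] {K : Finset V}
    {r k ℓ : ℕ} (hk : ℓ + 1 = 2 * k) (hK : K.card = k) :
    ¬ IsBergeCopy ((pathG ℓ).sum (pathG 1)) (coreFamily K r) := by
  rintro ⟨f, φ, hf, -, hφ⟩
  have hcov : ∀ x y, ((pathG ℓ).sum (pathG 1)).Adj x y → f x ∈ K ∨ f y ∈ K := by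
    intro x y hxy
    by_contra! hcon
    obtain ⟨h1, h2⟩ := hφ s(x, y) hxy
    simp only [coreFamily, mem_filter, mem_univ, true_and] at h1
    have := card_le_one.1 h1.2 (f x) (mem_sdiff.2 ⟨h2 x (Sym2.mem_mk_left _ _), hcon.1⟩)
      (f y) (mem_sdiff.2 ⟨h2 y (Sym2.mem_mk_right _ _), hcon.2⟩)
    exact hxy.ne (hf this)
  let idx : Fin (ℓ + 1) ⊕ Fin (1 + 1) → ℕ := Sum.elim (fun x => (x : ℕ) / 2) (fun _ => k)
  let A := univ.filter fun x => f x ∈ K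
  have hA : A.card ≤ K.card :=
    card_le_card_of_injOn f (fun x hx => by simpa [A] using hx) hf.injOn
  have hsub : range (k + 1) ⊆ A.image idx := by
    intro i hi
    rw [mem_range] at hi
    have key : ∀ x y, ((pathG ℓ).sum (pathG 1)).Adj x y → idx x = i → idx y = i →
        i ∈ A.image idx := by
      intro x y hxy hx hy
      rw [mem_image]
      rcases hcov x y hxy with h | h
      · exact ⟨x, by simpa [A] using h, hx⟩
      · exact ⟨y, by simpa [A] using h, hy⟩
    rcases Nat.lt_or_ge i k with h | h
    · refine key (Sum.inl ⟨2 * i, by omega⟩) (Sum.inl ⟨2 * i + 1, by omega⟩) ?_ ?_ ?_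
      · rw [SimpleGraph.sum_adj_inl, pathG, SimpleGraph.fromRel_adj]
        simp
      · simp [idx]
      · simp only [idx, Sum.elim_inl]
        omega
    · refine key (Sum.inr 0) (Sum.inr 1) ?_ ?_ ?_
      · rw [SimpleGraph.sum_adj_inr, pathG, SimpleGraph.fromRel_adj]
        simp
      · simp only [idx, Sum.elim_inr]; omega
      · simp only [idx, Sum.elim_inr]; omega
  have h1 := card_le_card hsub
  have h2 : (A.image idx).card ≤ A.card := card_image_le
  rw [card_range] at h1
  omega

/-! ### Popular links -/

lemma le_choose_of_lt {a b : ℕ} (hb : 1 ≤ b) (hba : b < a) : a ≤ a.choose b := by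
  induction a with
  | zero => omega
  | succ a ih =>
    obtain ⟨b, rfl⟩ : ∃ c, b = c + 1 := ⟨b - 1, by omega⟩
    rw [Nat.choose_succ_succ']
    have h1 : 0 < a.choose b := Nat.choose_pos (by omega)
    rcases Nat.lt_or_ge (b + 1) a with h | h
    · have := ih h
      omega
    · obtain rfl : a = b + 1 := by omega
      simp

/-- Two vertices can follow each other in a Berge path through a fresh vertex with link `L`
precisely when they lie in distinct members of `L`. This says that the elements of `U` are
covered by `L`, and that any two of them can be linked in this way. -/
def LinkGood {V : Type*} (L : Finset (Finset V)) (U : Finset V) : Prop :=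
  (∀ c ∈ U, ∃ S ∈ L, c ∈ S) ∧
    ∀ c ∈ U, ∀ c' ∈ U, c ≠ c' → ∃ S ∈ L, ∃ S' ∈ L, c ∈ S ∧ c' ∈ S' ∧ S ≠ S'

lemma LinkGood.mono {V : Type*} {L : Finset (Finset V)} {U U' : Finset V}
    (h : LinkGood L U) (hU : U' ⊆ U) : LinkGood L U' :=
  ⟨fun c hc => h.1 c (hU hc), fun c hc c' hc' => h.2 c (hU hc) c' (hU hc')⟩

/-- For an inclusion-maximal good set `U`, each member of `L` not contained in `U` has a vertex
of `U` lying in no other member of `L`. Hence `|U| < k` would give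
`|L| < C(k - 1, m) + (k - 1) ≤ C(k, m)`, or `|L| ≤ k - 1` if no member of `L` is inside `U`. -/
lemma exists_linkGood {V : Type*} [Fintype V] [DecidableEq V] {L : Finset (Finset V)} {m k : ℕ}
    (hL : ∀ S ∈ L, S.card = m) (hm : 2 ≤ m) (hmk : m < k) (hcard : k.choose m ≤ L.card) :
    ∃ U : Finset V, U.card = k ∧ LinkGood L U := by
  classical
  obtain ⟨U, hUmax⟩ := (univ.filter fun U : Finset V => LinkGood L U).exists_maximal
    ⟨∅, mem_filter.2 ⟨mem_univ _, by simp [LinkGood]⟩⟩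
  have hU : LinkGood L U := by simpa using hUmax.prop
  rcases Nat.lt_or_ge U.card k with hlt | hge
  swap
  · obtain ⟨U', hU', hc⟩ := exists_subset_card_eq hge
    exact ⟨U', hc, hU.mono hU'⟩
  exfalso
  have hrep : ∀ S ∈ L, ¬ S ⊆ U → ∃ u ∈ U, u ∈ S ∧ ∀ T ∈ L, u ∈ T → T = S := by
    intro S hS hSU
    obtain ⟨w, hwS, hwU⟩ := not_subset.1 hSU
    by_contra! hcon
    -- Otherwise `w` could be added to `U`.
    have hgood : LinkGood L (insert w U) := by
      have hw : ∀ u ∈ U, ∃ T ∈ L, u ∈ T ∧ T ≠ S := by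
        intro u hu
        by_cases huS : u ∈ S
        · exact hcon u hu huS
        · obtain ⟨T, hT, huT⟩ := hU.1 u hu
          exact ⟨T, hT, huT, fun h => huS (h ▸ huT)⟩
      refine ⟨fun c hc => ?_, fun c hc c' hc' hne => ?_⟩
      · rcases mem_insert.1 hc with rfl | hc
        · exact ⟨S, hS, hwS⟩
        · exact hU.1 c hc
      · rcases mem_insert.1 hc with rfl | hc1 <;> rcases mem_insert.1 hc' with rfl | hc1'
        · exact absurd rfl hne
        · obtain ⟨T, hT, h1, h2⟩ := hw c' hc1'
          exact ⟨S, hS, T, hT, hwS, h1, h2.symm⟩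
        · obtain ⟨T, hT, h1, h2⟩ := hw c hc1
          exact ⟨T, hT, S, hS, h1, hwS, h2⟩
        · exact hU.2 c hc1 c' hc1' hne
    have := hUmax.le_of_ge (y := insert w U) (by simpa using hgood) (subset_insert w U)
    exact hwU (this (mem_insert_self w U))
  have : Nonempty V := by
    obtain ⟨S, hS⟩ := card_pos.1 (lt_of_lt_of_le (Nat.choose_pos hmk.le) hcard)
    obtain ⟨x, -⟩ := card_pos.1 (show 0 < S.card by rw [hL S hS]; omega)
    exact ⟨x⟩
  choose! ρ hρU hρS hρ using hrep
  set L1 := L.filter (fun S => S ⊆ U) with hL1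
  set L2 := L.filter (fun S => ¬ S ⊆ U) with hL2
  have hsum : L1.card + L2.card = L.card := card_filter_add_card_filter_not _
  have hinj : Set.InjOn ρ (L2 : Set (Finset V)) := by
    intro S hS T hT h
    simp only [hL2, coe_filter, Set.mem_ofPred_eq] at hS hT
    exact (hρ T hT.1 hT.2 S hS.1 (h ▸ hρS S hS.1 hS.2))
  rcases L1.eq_empty_or_nonempty with h0 | ⟨S0, hS0⟩
  · have h1 : L2.card ≤ U.card := card_le_card_of_injOn ρ (fun S hS => by
      simp only [hL2, coe_filter, Set.mem_ofPred_eq] at hS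
      exact hρU S hS.1 hS.2) hinj
    have h2 : L1.card = 0 := by rw [h0, card_empty]
    have h3 := le_choose_of_lt (show 1 ≤ m by omega) hmk
    omega
  · rw [hL1, mem_filter] at hS0
    obtain ⟨x, hx⟩ := card_pos.1 (show 0 < S0.card by rw [hL S0 hS0.1]; omega)
    have h1 : L2.card ≤ (U.erase x).card := card_le_card_of_injOn ρ (fun S hS => by
      simp only [hL2, coe_filter, Set.mem_ofPred_eq] at hS
      rw [mem_coe, mem_erase]
      refine ⟨fun h => hS.2 ?_, hρU S hS.1 hS.2⟩
      rw [← hρ S hS.1 hS.2 S0 hS0.1 (h ▸ hx)]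
      exact hS0.2) hinj
    rw [card_erase_of_mem (hS0.2 hx)] at h1
    have hpos : 0 < U.card := card_pos.2 ⟨x, hS0.2 hx⟩
    have h2 : L1.card ≤ (U.powersetCard m).card := card_le_card (fun S hS => by
      rw [hL1, mem_filter] at hS
      exact mem_powersetCard.2 ⟨hS.2, hL S hS.1⟩)
    rw [card_powersetCard] at h2
    have h3 : U.card.choose m ≤ (k - 1).choose m := Nat.choose_le_choose m (by omega)
    have h4 : k.choose m = (k - 1).choose (m - 1) + (k - 1).choose m := by
      obtain ⟨k, rfl⟩ : ∃ j, k = j + 1 := ⟨k - 1, by omega⟩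
      obtain ⟨m, rfl⟩ : ∃ j, m = j + 1 := ⟨m - 1, by omega⟩
      exact Nat.choose_succ_succ k m
    have h5 := le_choose_of_lt (show 1 ≤ m - 1 by omega) (show m - 1 < k - 1 by omega)
    omega

/-- A good set of `k` vertices for a link `L` shared by at least `k` vertices (the set `D`)
carries a Berge path with `2k` core vertices alternating between `D` and `U`. -/
lemma exists_path_of_linkGood {V : Type*} [DecidableEq V] {H L : Finset (Finset V)}
    {U C D : Finset V} {k ℓ : ℕ} (hk : 2 ≤ k) (hℓ : ℓ + 1 = 2 * k)
    (hU : LinkGood L U) (hUk : U.card = k) (hLC : ∀ S ∈ L, S ⊆ C) (hDC : Disjoint D C)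
    (hD : k ≤ D.card) (hDL : ∀ v ∈ D, ∀ S ∈ L, insert v S ∈ H) :
    ∃ (f : Fin (ℓ + 1) → V) (φ : Sym2 (Fin (ℓ + 1)) → Finset V),
      Function.Injective f ∧ Set.InjOn φ (pathG ℓ).edgeSet ∧
      (∀ e ∈ (pathG ℓ).edgeSet, φ e ∈ H ∧ ∀ x ∈ e, f x ∈ φ e) ∧
      (∀ x, f x ∈ U ∪ D) ∧
      (∀ e ∈ (pathG ℓ).edgeSet, ∃ v ∈ D, v ∈ φ e) := by
  classical
  have hseq : ∀ A : Finset V, k ≤ A.card →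
      ∃ c : ℕ → V, (∀ i < k, c i ∈ A) ∧ ∀ i < k, ∀ j < k, c i = c j → i = j := by
    intro A hA
    obtain ⟨x0, -⟩ := card_pos.1 (show 0 < A.card by omega)
    refine ⟨fun i => if h : i < k then A.equivFin.symm ⟨i, by omega⟩ else x0, ?_, ?_⟩
    · intro i hi
      simp only [dif_pos hi]
      exact Subtype.prop _
    · intro i hi j hj h
      simp only [dif_pos hi, dif_pos hj] at h
      simpa using A.equivFin.symm.injective (Subtype.ext h)
  obtain ⟨c, hcU, hc⟩ := hseq U hUk.ge
  obtain ⟨v, hvD, hv⟩ := hseq D hD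
  have hUC : ∀ x ∈ U, x ∈ C := by
    intro x hx
    obtain ⟨S, hS, hxS⟩ := hU.1 x hx
    exact hLC S hS hxS
  have hDC' : ∀ x ∈ D, x ∉ C := fun x hx => disjoint_left.1 hDC hx
  have hPQ : ∀ i, i + 1 < k → ∃ P Q, P ∈ L ∧ Q ∈ L ∧ c i ∈ P ∧ c (i + 1) ∈ Q ∧ P ≠ Q := by
    intro i hi
    obtain ⟨P, hP, Q, hQ, h1, h2, h3⟩ := hU.2 (c i) (hcU i (by omega)) (c (i + 1)) (hcU _ hi)
      (fun h => by have := hc i (by omega) (i + 1) hi h; omega)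
    exact ⟨P, Q, hP, hQ, h1, h2, h3⟩
  choose! P Q hP hQ hcP hcQ hne using hPQ
  -- The `j`-th hyperedge is `v ((j + 1) / 2)` together with `T j`, which contains `c (j / 2)`.
  let T : ℕ → Finset V := fun j =>
    if j % 2 = 1 then P (j / 2) else if j = 0 then P 0 else Q (j / 2 - 1)
  have hTL : ∀ j < ℓ, T j ∈ L := by
    intro j hj
    simp only [T]
    split_ifs with h1 h2
    · exact hP _ (by omega)
    · exact hP _ (by omega)
    · exact hQ _ (by omega)
  have hTc : ∀ j < ℓ, c (j / 2) ∈ T j := by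
    intro j hj
    simp only [T]
    split_ifs with h1 h2
    · exact hcP _ (by omega)
    · subst h2
      exact hcP _ (by omega)
    · have := hcQ (j / 2 - 1) (by omega)
      rwa [show j / 2 - 1 + 1 = j / 2 by omega] at this
  have hTne : ∀ j, j % 2 = 1 → j + 1 < ℓ → T j ≠ T (j + 1) := by
    intro j hj hjl
    have h1 : T j = P (j / 2) := if_pos hj
    have h2 : T (j + 1) = Q (j / 2) := by
      simp only [T]
      rw [if_neg (by omega), if_neg (by omega), show (j + 1) / 2 - 1 = j / 2 by omega]
    rw [h1, h2]
    exact hne _ (by omega)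
  have hvT : ∀ i < k, ∀ j < ℓ, v i ∉ T j := fun i hi j hj h =>
    hDC' _ (hvD i hi) (hLC _ (hTL j hj) h)
  let g : ℕ → V := fun j => if j % 2 = 0 then v (j / 2) else c (j / 2)
  let ψ : ℕ → Finset V := fun j => insert (v ((j + 1) / 2)) (T j)
  have hginj : ∀ i ≤ ℓ, ∀ j ≤ ℓ, g i = g j → i = j := by
    intro i hi j hj h
    simp only [g] at h
    split_ifs at h with hi2 hj2 hj2
    · have := hv _ (by omega) _ (by omega) h
      omega
    · exact absurd (hUC _ (hcU (j / 2) (by omega))) (h ▸ hDC' _ (hvD (i / 2) (by omega)))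
    · exact absurd (hUC _ (hcU (i / 2) (by omega))) (h ▸ hDC' _ (hvD (j / 2) (by omega)))
    · have := hc _ (by omega) _ (by omega) h
      omega
  have hψinj : ∀ i < ℓ, ∀ j < ℓ, ψ i = ψ j → i = j := by
    intro i hi j hj h
    have hmem : v ((i + 1) / 2) ∈ ψ j := by rw [← h]; exact mem_insert_self _ _
    have hvv : (i + 1) / 2 = (j + 1) / 2 := by
      rcases mem_insert.1 hmem with h' | h'
      · exact hv _ (by omega) _ (by omega) h'
      · exact absurd h' (hvT _ (by omega) _ hj)
    have hTT : T i = T j := by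
      rw [← erase_insert (hvT ((i + 1) / 2) (by omega) i hi),
        ← erase_insert (hvT ((j + 1) / 2) (by omega) j hj), hvv]
      simp only [ψ, hvv] at h
      rw [h]
    by_contra hij
    rcases Nat.lt_or_ge i j with hlt | hge
    · obtain rfl : j = i + 1 := by omega
      exact hTne i (by omega) hj hTT
    · obtain rfl : i = j + 1 := by omega
      exact hTne j (by omega) hi hTT.symm
  have hψH : ∀ i < ℓ, ψ i ∈ H ∧ g i ∈ ψ i ∧ g (i + 1) ∈ ψ i := by
    intro i hi
    refine ⟨hDL _ (hvD _ (by omega)) _ (hTL i hi), ?_, ?_⟩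
    · simp only [g]
      split_ifs
      · rw [show i / 2 = (i + 1) / 2 by omega]
        exact mem_insert_self _ _
      · exact mem_insert_of_mem (hTc i hi)
    · simp only [g]
      split_ifs
      · exact mem_insert_self _ _
      · rw [show (i + 1) / 2 = i / 2 by omega]
        exact mem_insert_of_mem (hTc i hi)
  obtain ⟨f, φ, h1, h2, h3, h4, h5⟩ := isBergeCopy_path_of_seq g ψ hginj hψinj hψH
  refine ⟨f, φ, h1, h2, h3, fun x => ?_, fun e he => ?_⟩
  · obtain ⟨i, hi, hx⟩ := h4 x
    rw [hx, mem_union]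
    simp only [g]
    split_ifs
    · exact Or.inr (hvD _ (by omega))
    · exact Or.inl (hcU _ (by omega))
  · obtain ⟨i, hi, hx⟩ := h5 e he
    exact ⟨v ((i + 1) / 2), hvD _ (by omega), by rw [hx]; exact mem_insert_self _ _⟩

/-- Once `k + r` vertices outside `C` share a link of size at least `C(k, r - 1)` inside `C`, the
hypergraph is contained in a core family: a hyperedge with two vertices outside the good
set `U` would complete a path avoiding it to a forbidden copy. -/
lemma subset_coreFamily_of_popular {V : Type*} [Fintype V] [DecidableEq V]
    {H L : Finset (Finset V)} {C D : Finset V} {r k ℓ : ℕ} (hr : 3 ≤ r) (hrk : r ≤ k)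
    (hℓ : ℓ + 1 = 2 * k) (hH : ∀ e ∈ H, e.card = r)
    (hfree : ¬ IsBergeCopy ((pathG ℓ).sum (pathG 1)) H)
    (hL : ∀ S ∈ L, S.card = r - 1) (hLC : ∀ S ∈ L, S ⊆ C) (hDC : Disjoint D C)
    (hD : k + r ≤ D.card) (hDL : ∀ v ∈ D, ∀ S ∈ L, insert v S ∈ H)
    (hLk : k.choose (r - 1) ≤ L.card) :
    ∃ U : Finset V, U.card = k ∧ H ⊆ coreFamily U r := by
  obtain ⟨U, hUk, hU⟩ := exists_linkGood hL (by omega) (show r - 1 < k by omega) hLk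
  refine ⟨U, hUk, fun h hh => ?_⟩
  simp only [coreFamily, mem_filter, mem_univ, true_and]
  refine ⟨hH h hh, ?_⟩
  by_contra! hcon
  obtain ⟨a, ha, b, hb, hab⟩ := one_lt_card.1 hcon
  rw [mem_sdiff] at ha hb
  obtain ⟨f, φ, h1, h2, h3, h4, h5⟩ := exists_path_of_linkGood (H := H) (D := D \ h)
    (by omega) hℓ hU hUk hLC (disjoint_of_subset_left sdiff_subset hDC)
    (by have := le_card_sdiff h D; rw [hH h hh] at this; omega)
    (fun v hv => hDL v (mem_sdiff.1 hv).1)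
  have hout : ∀ z, z ∈ h → z ∉ U → ∀ x, f x ≠ z := by
    rintro z hz hzU x rfl
    rcases mem_union.1 (h4 x) with h' | h'
    · exact hzU h'
    · exact (mem_sdiff.1 h').2 hz
  refine hfree (isBergeCopy_sum_of_path h1 h2 h3 hh (fun e he heq => ?_) hab ha.1 hb.1
    (hout a ha.1 ha.2) (hout b hb.1 hb.2))
  obtain ⟨v, hv, hve⟩ := h5 e he
  exact (mem_sdiff.1 hv).2 (heq ▸ hve)

/-! ### Counting -/

/-- If all but `Q` hyperedges have at most one vertex outside a set `C` of size `2k`, then either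
`|H| ≤ (C(k, r - 1) - 1) n + O(1)`, or many vertices outside `C` have the same link in `C`, of
size at least `C(k, r - 1)`: there are boundedly many possible links. -/
lemma exists_popular {V : Type*} [Fintype V] [DecidableEq V]
    {H E : Finset (Finset V)} {C : Finset V} {r k Q : ℕ} (hrk : r ≤ k)
    (hH : ∀ e ∈ H, e.card = r) (hC : C.card = 2 * k) (hE : E.card ≤ Q)
    (hHE : ∀ h ∈ H, h ∉ E → (h \ C).card ≤ 1)
    (hn : Q + (2 * k).choose r +
        2 ^ (2 * k).choose (r - 1) * (k + r) * (2 * k).choose (r - 1) +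
        k.choose (r - 1) * k ≤ Fintype.card V)
    (hcard : k.choose (r - 1) * (Fintype.card V - k) < H.card) :
    ∃ L : Finset (Finset V), ∃ D : Finset V, (∀ S ∈ L, S.card = r - 1) ∧ (∀ S ∈ L, S ⊆ C) ∧
      Disjoint D C ∧ k + r ≤ D.card ∧ (∀ v ∈ D, ∀ S ∈ L, insert v S ∈ H) ∧
      k.choose (r - 1) ≤ L.card := by
  classical
  set c := k.choose (r - 1) with hc
  set t := (2 * k).choose (r - 1) with ht
  have hcpos : 0 < c := Nat.choose_pos (by omega)
  let link : V → Finset (Finset V) := fun v =>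
    (C.powersetCard (r - 1)).filter fun S => insert v S ∈ H
  have hlink : ∀ v, (link v).card ≤ t := fun v => by
    rw [ht, ← hC, ← card_powersetCard]
    exact card_filter_le _ _
  set B := Cᶜ.filter fun v => c ≤ (link v).card with hB
  rcases Nat.lt_or_ge (2 ^ t * (k + r)) B.card with hlt | hge
  · obtain ⟨L, hL, hfib⟩ := exists_lt_card_fiber_of_mul_lt_card_of_maps_to
      (s := B) (t := (C.powersetCard (r - 1)).powerset) (f := link) (n := k + r)
      (fun v _ => mem_powerset.2 (filter_subset _ _))
      (by rwa [card_powerset, card_powersetCard, hC])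
    rw [mem_powerset] at hL
    refine ⟨L, B.filter fun v => link v = L, fun S hS => (mem_powersetCard.1 (hL hS)).2,
      fun S hS => (mem_powersetCard.1 (hL hS)).1, ?_, hfib.le, ?_, ?_⟩
    · rw [disjoint_left]
      intro v hv
      rw [mem_filter, hB, mem_filter, mem_compl] at hv
      exact hv.1.1
    · intro v hv S hS
      rw [mem_filter] at hv
      rw [← hv.2] at hS
      exact (mem_filter.1 hS).2
    · obtain ⟨v, hv⟩ := card_pos.1 (lt_of_le_of_lt (Nat.zero_le _) hfib)
      rw [mem_filter, hB, mem_filter] at hv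
      rw [← hv.2]
      exact hv.1.2
  · exfalso
    have hsub : H ⊆ E ∪ C.powersetCard r ∪ Cᶜ.biUnion fun v => (link v).image (insert v) := by
      intro h hh
      rw [mem_union, mem_union]
      by_cases hhE : h ∈ E
      · exact Or.inl (Or.inl hhE)
      have h1 := hHE h hh hhE
      rcases Nat.lt_or_ge (h \ C).card 1 with h3 | h3
      · exact Or.inl (Or.inr (mem_powersetCard.2
          ⟨sdiff_eq_empty_iff_subset.1 (card_eq_zero.1 (by omega)), hH h hh⟩))
      · right
        obtain ⟨v, hv⟩ := card_eq_one.1 (le_antisymm h1 h3)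
        have hvh : v ∈ h \ C := by rw [hv]; exact mem_singleton_self v
        rw [mem_sdiff] at hvh
        rw [mem_biUnion]
        refine ⟨v, mem_compl.2 hvh.2, mem_image.2 ⟨h.erase v, ?_, insert_erase hvh.1⟩⟩
        rw [mem_filter, mem_powersetCard, insert_erase hvh.1]
        refine ⟨⟨fun x hx => ?_, ?_⟩, hh⟩
        · rw [mem_erase] at hx
          by_contra hxC
          have : x ∈ h \ C := mem_sdiff.2 ⟨hx.2, hxC⟩
          rw [hv, mem_singleton] at this
          exact hx.1 this
        · rw [card_erase_of_mem hvh.1, hH h hh]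
    have h1 : (Cᶜ.biUnion fun v => (link v).image (insert v)).card ≤
        Fintype.card V * (c - 1) + B.card * t := by
      calc _ ≤ ∑ v ∈ Cᶜ, ((link v).image (insert v)).card := card_biUnion_le
        _ ≤ ∑ v ∈ Cᶜ, ((c - 1) + if c ≤ (link v).card then t else 0) := by
            refine sum_le_sum fun v _ => card_image_le.trans ?_
            have := hlink v
            split_ifs <;> omega
        _ = Cᶜ.card * (c - 1) + B.card * t := by
            rw [sum_add_distrib, sum_const, ← sum_filter, sum_const, smul_eq_mul, smul_eq_mul]
        _ ≤ _ := by
            gcongr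
            exact card_le_univ _
    have h2 := card_le_card hsub
    have h3 := card_union_le (E ∪ C.powersetCard r)
      (Cᶜ.biUnion fun v => (link v).image (insert v))
    have h4 := card_union_le E (C.powersetCard r)
    rw [card_powersetCard, hC] at h4
    have h5 : B.card * t ≤ 2 ^ t * (k + r) * t := Nat.mul_le_mul_right _ hge
    have h6 : Fintype.card V * (c - 1) + Fintype.card V = Fintype.card V * c := by
      obtain ⟨d, hd⟩ : ∃ d, c = d + 1 := ⟨c - 1, by omega⟩
      rw [hd]
      simp [Nat.mul_succ]
    have h7 : Fintype.card V * c ≤ c * (Fintype.card V - k) + c * k := by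
      rw [← Nat.mul_add, Nat.mul_comm]
      exact Nat.mul_le_mul_left _ (by omega)
    omega

lemma bddAbove_exBerge {α : Type*} (r n : ℕ) (F : SimpleGraph α) :
    BddAbove {m | ∃ H : Finset (Finset (Fin n)),
      (∀ e ∈ H, e.card = r) ∧ ¬ IsBergeCopy F H ∧ H.card = m} :=
  ⟨Fintype.card (Finset (Fin n)), by
    rintro m ⟨H, -, -, rfl⟩
    exact card_le_univ H⟩

lemma le_exBerge {α : Type*} {r n : ℕ} {F : SimpleGraph α} {H : Finset (Finset (Fin n))}
    (h1 : ∀ e ∈ H, e.card = r) (h2 : ¬ IsBergeCopy F H) : H.card ≤ exBerge r n F :=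
  le_csSup (bddAbove_exBerge r n F) ⟨H, h1, h2, rfl⟩

lemma exBerge_le {α : Type*} {r n x : ℕ} {F : SimpleGraph α}
    (h : ∀ H : Finset (Finset (Fin n)), (∀ e ∈ H, e.card = r) → ¬ IsBergeCopy F H →
      H.card ≤ x) : exBerge r n F ≤ x :=
  csSup_le' (by
    rintro m ⟨H, h1, h2, rfl⟩
    exact h H h1 h2)

/-- A Berge copy of `F ∪ F'` contains a Berge copy of `F`. -/
lemma IsBergeCopy.of_sum {α β V : Type*} {F : SimpleGraph α} {F' : SimpleGraph β}
    {H : Finset (Finset V)} (h : IsBergeCopy (F.sum F') H) : IsBergeCopy F H := by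
  obtain ⟨f, φ, hf, hφ, hH⟩ := h
  have hmem : ∀ e ∈ F.edgeSet, Sym2.map Sum.inl e ∈ (F.sum F').edgeSet := by
    intro e he
    induction e using Sym2.ind with
    | _ x y => simpa using he
  refine ⟨f ∘ Sum.inl, φ ∘ Sym2.map Sum.inl, hf.comp Sum.inl_injective, ?_, ?_⟩
  · intro e he e' he' h
    exact Sym2.map.injective Sum.inl_injective (hφ (hmem e he) (hmem e' he') h)
  · intro e he
    obtain ⟨h1, h2⟩ := hH _ (hmem e he)
    exact ⟨h1, fun x hx => h2 _ (Sym2.mem_map.2 ⟨x, hx, rfl⟩)⟩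

theorem ex_berge_path_union_edge (r ℓ : ℕ) (hr : 3 ≤ r) (hodd : Odd ℓ)
    (hl : 2 * r + 11 ≤ ℓ) :
    ∃ N, ∀ n ≥ N,
      exBerge r n ((pathG ℓ).sum (pathG 1)) =
        max (exBerge r n (pathG ℓ))
          (((ℓ + 1) / 2).choose (r - 1) * (n - (ℓ + 1) / 2) + ((ℓ + 1) / 2).choose r) := by
  classical
  obtain ⟨k, hk⟩ : ∃ k, (ℓ + 1) / 2 = k := ⟨_, rfl⟩
  have hℓ : ℓ + 1 = 2 * k := by
    obtain ⟨j, rfl⟩ := hodd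
    omega
  rw [hk]
  refine ⟨Fintype.card (Sym2 (Fin (ℓ + 1))) + (2 * k).choose r +
    2 ^ (2 * k).choose (r - 1) * (k + r) * (2 * k).choose (r - 1) +
    k.choose (r - 1) * k + k, fun n hn => le_antisymm (exBerge_le fun H hH hfree => ?_)
      (max_le (exBerge_le fun H hH hfree => ?_) ?_)⟩
  · by_cases hP : IsBergeCopy (pathG ℓ) H
    swap
    · exact le_max_of_le_left (le_exBerge hH hP)
    refine le_max_of_le_right ?_
    by_contra! hcon
    obtain ⟨f, φ, hf, hφ, hfφ⟩ := hP
    obtain ⟨L, D, h1, h2, h3, h4, h5, h6⟩ := exists_popular (H := H)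
      (E := univ.image φ) (C := univ.image f) (r := r) (k := k)
      (Q := Fintype.card (Sym2 (Fin (ℓ + 1)))) (by omega) hH
      (by rw [card_image_of_injective _ hf, card_univ, Fintype.card_fin, hℓ])
      card_image_le
      (fun h hh hE => by
        by_contra! hlt
        obtain ⟨a, ha, b, hb, hab⟩ := one_lt_card.1 hlt
        simp only [mem_sdiff, mem_image, mem_univ, true_and, not_exists] at ha hb hE
        exact hfree (isBergeCopy_sum_of_path hf hφ hfφ hh (fun e _ => hE e) hab ha.1 hb.1
          ha.2 hb.2))
      (by rw [Fintype.card_fin]; omega)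
      (by rw [Fintype.card_fin]; omega)
    obtain ⟨U, hU, hsub⟩ := subset_coreFamily_of_popular hr (by omega) hℓ hH hfree h1 h2 h3 h4
      h5 h6
    have := card_le_card hsub
    rw [card_coreFamily U (by omega), hU, Fintype.card_fin] at this
    omega
  · exact le_exBerge hH fun h => hfree h.of_sum
  · obtain ⟨K, -, hK⟩ := exists_subset_card_eq (s := (univ : Finset (Fin n))) (n := k)
      (by rw [card_univ, Fintype.card_fin]; omega)
    have h1 := card_coreFamily K (show 1 ≤ r by omega)
    rw [hK, Fintype.card_fin] at h1
    rw [← h1]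
    exact le_exBerge (fun e he => (mem_filter.1 he).2.1) (not_isBergeCopy_coreFamily hℓ hK)
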